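/- Let f : {0,1}* → {0,1} and let σ be a viable and dynamic execution strategy for Γ_Φ. Then for every I ∈ {0, 1, …, n} there exists a scenario s_I such that: (a) [σ(s_I)]_{B_{I+1}} − [σ(s_I)]_{A_{I+1}} ≤ I, and (b) s_I(y_i) = f(s_I(x₁), …, s_I(x_i)) for every i = 1, …, I. -/

import Mathlib

/-!
The scenario for `I + 1` is obtained from the scenario `s` for `I` by resetting `x_I` and `y_I`
only (0-based indices).

The tool is `Dynamic.agree`: if two scenarios differ only on variables observed no earlier than
time `t` in the first one, then a dynamic strategy schedules identically all tasks that either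
scenario executes at a time `≤ t`.

Suppose both `C_I⁰` and `C_I¹` occurred later than `t := A_I + I + 1` in `s`. Then the values of
`c_I⁰` and `c_I¹` influence no task executed up to time `t`, in particular neither `A_I` nor
`B_I`. With both values true, `D_I ≤ B_I + 1 ≤ t`, so `D_I` is executed at the same
time with both values false, where `D_I ≥ A_I + n + 2`: a contradiction. So some `C_I^b` occurs by
time `A_I + I + 1` (`C_early`), hence before `X_I` and `Y_I`. Setting first `x_I := b`, then
`y_I` to the value prescribed by `f`, preserves the times of `A_I` and `C_I^b`; now
`B_{I+1} ≤ C_I^b + n + 4 ≤ A_I + I + 1 + n + 4` and `A_{I+1} ≥ A_I + n + 4`.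
-/

open Classical

/-- A label over propositional variables `P`: a conjunction of positive or negative
literals over distinct variables, encoded as a partial assignment (`none` means the
variable does not occur in the label). The empty label is `fun _ => none`. -/
abbrev CLabel (P : Type) := P → Option Bool

/-- The empty label `λ`. -/
def emptyLabel (P : Type) : CLabel P := fun _ => none

/-- A scenario `s` satisfies a label `ℓ` (written `s ⊨ ℓ`). -/
def sats {P : Type} (s : P → Bool) (ℓ : CLabel P) : Prop :=
  ∀ p b, ℓ p = some b → s p = b

/-- A Conditional Simple Temporal Network over tasks `T` and propositional
variables `P`.  A labeled constraint `(X, Y, δ, ℓ)` represents `(Y - X ≤ δ, ℓ)`. -/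
structure CSTN (T P : Type) where
  /-- The labeled constraints. -/
  C : Set (T × T × ℝ × CLabel P)
  Cfin : C.Finite
  /-- The label of each task. -/
  L : T → CLabel P
  /-- The observation tasks. -/
  OT : Set T
  /-- The observation task of each propositional variable. -/
  obs : P → T
  obs_mem : ∀ p, obs p ∈ OT
  obs_inj : Function.Injective obs
  obs_surj : ∀ X ∈ OT, ∃ p, obs p = X
  /-- Restriction WD1. -/
  wd1 : ∀ c ∈ C, ∀ s : P → Bool, sats s c.2.2.2 → sats s (L c.1) ∧ sats s (L c.2.1)

namespace CSTN

variable {T P : Type} (Γ : CSTN T P)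

/-- The tasks `𝒯_s` executed in scenario `s` (the tasks of the projection `Γ_s`).
An execution strategy is encoded as a total function `σ : (P → Bool) → T → ℝ`;
the values `σ s X` for `X ∉ 𝒯_s` are irrelevant. -/
def Tasks (s : P → Bool) : Set T := {X | sats s (Γ.L X)}

/-- The history `Hist(t, s, σ)`: the partial scenario recording the values in `s` of
the propositional variables observed strictly before time `t`. -/
noncomputable def Hist (σ : (P → Bool) → T → ℝ) (t : ℝ) (s : P → Bool) : P → Option Bool :=
  fun p => if Γ.obs p ∈ Γ.Tasks s ∧ σ s (Γ.obs p) < t then some (s p) else none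

/-- The execution strategy `σ` is dynamic. -/
def Dynamic (σ : (P → Bool) → T → ℝ) : Prop :=
  ∀ s s' : P → Bool, ∀ X ∈ Γ.Tasks s,
    Γ.Hist σ (σ s X) s = Γ.Hist σ (σ s X) s' → X ∈ Γ.Tasks s' ∧ σ s' X = σ s X

/-- The execution strategy `σ` is viable: in every scenario `s`, the schedule `σ s`
satisfies all constraints of the projection `Γ_s`. -/
def Viable (σ : (P → Bool) → T → ℝ) : Prop :=
  ∀ s : P → Bool, ∀ c ∈ Γ.C, sats s c.2.2.2 → σ s c.2.1 - σ s c.1 ≤ c.2.2.1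

/-- `Γ` is dynamically controllable: it admits a dynamic and viable execution strategy. -/
def DynamicallyControllable : Prop :=
  ∃ σ : (P → Bool) → T → ℝ, Γ.Dynamic σ ∧ Γ.Viable σ

end CSTN

/-! ### The reduction from Q3SAT: the CSTN `Γ_Φ` -/

/-- A literal of the Q3SAT formula: a variable `x i` (`Sum.inl i`) or `y i`
(`Sum.inr i`) together with its sign (`true` = positive occurrence). -/
abbrev QLit (n : ℕ) := (Fin n ⊕ Fin n) × Bool

/-- A clause `l₁ ∨ l₂ ∨ l₃` of the 3CNF `φ`. -/
abbrev QClause (n : ℕ) := QLit n × QLit n × QLit n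

/-- The propositional variables `x i`, `y i`, `c i ⁰`, `c i ¹` of `Γ_Φ` (0-based). -/
inductive PhiVar (n : ℕ) where
  | x (i : Fin n) | y (i : Fin n) | c0 (i : Fin n) | c1 (i : Fin n)
deriving DecidableEq

/-- The tasks of `Γ_Φ` (0-based: paper's `A_i`, `i = 1, …, n+1`, is `A ⟨i-1⟩`). -/
inductive PhiTask (n : ℕ) where
  | A (i : Fin (n + 1)) | B (i : Fin (n + 1))
  | C0 (i : Fin n) | C1 (i : Fin n) | D (i : Fin n)
  | X (i : Fin n) | Y (i : Fin n)
deriving DecidableEq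

/-- The propositional variable on which a literal occurs. -/
def litVar {n : ℕ} (l : QLit n) : PhiVar n :=
  match l.1 with
  | .inl i => .x i
  | .inr i => .y i

/-- The literals of a clause occur on pairwise distinct variables
(so that `ℓ_j = ¬l₁ ∧ ¬l₂ ∧ ¬l₃` is a well-formed label). -/
def GoodClause {n : ℕ} (c : QClause n) : Prop :=
  litVar c.1 ≠ litVar c.2.1 ∧ litVar c.1 ≠ litVar c.2.2 ∧ litVar c.2.1 ≠ litVar c.2.2

/-- A literal evaluates to true under an assignment. -/
def evalLit {n : ℕ} (s : PhiVar n → Bool) (l : QLit n) : Prop := s (litVar l) = l.2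

/-- A clause evaluates to true under an assignment. -/
def evalClause {n : ℕ} (s : PhiVar n → Bool) (c : QClause n) : Prop :=
  evalLit s c.1 ∨ evalLit s c.2.1 ∨ evalLit s c.2.2

/-- The 3CNF `φ` evaluates to true under an assignment. -/
def evalCNF {n m : ℕ} (cl : Fin m → QClause n) (s : PhiVar n → Bool) : Prop :=
  ∀ j, evalClause s (cl j)

/-- The label consisting of the single literal forcing `p` to `b`. -/
def singleLabel {n : ℕ} (p : PhiVar n) (b : Bool) : CLabel (PhiVar n) :=
  fun q => if q = p then some b else none

/-- The label conjunction of two literals. -/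
def pairLabel {n : ℕ} (p : PhiVar n) (bp : Bool) (q : PhiVar n) (bq : Bool) :
    CLabel (PhiVar n) :=
  fun r => if r = p then some bp else if r = q then some bq else none

/-- The label `ℓ_j := ¬l_{j,1} ∧ ¬l_{j,2} ∧ ¬l_{j,3}`, the negation of the clause. -/
def clauseLabel {n : ℕ} (c : QClause n) : CLabel (PhiVar n) :=
  fun q =>
    if q = litVar c.1 then some (!c.1.2)
    else if q = litVar c.2.1 then some (!c.2.1.2)
    else if q = litVar c.2.2 then some (!c.2.2.2)
    else none

/-- `𝒪(x i) = X i`, `𝒪(y i) = Y i`, `𝒪(c i ⁰) = C i ⁰`, `𝒪(c i ¹) = C i ¹`. -/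
def phiObs (n : ℕ) : PhiVar n → PhiTask n
  | .x i => .X i
  | .y i => .Y i
  | .c0 i => .C0 i
  | .c1 i => .C1 i

abbrev PhiCon (n : ℕ) := PhiTask n × PhiTask n × ℝ × CLabel (PhiVar n)

/-- The seven constraints of the `i`-th gadget (as `(X, Y, δ, ℓ)` meaning `Y - X ≤ δ`):
`(D_i ≤ B_i + 1, c_i⁰ ∧ c_i¹)`, `(D_i ≥ A_i + (n+2), ¬c_i⁰ ∧ ¬c_i¹)`,
`(X_i ≥ A_i + (n+2), λ)`, `(Y_i ≥ X_i + 1, λ)`, `(A_{i+1} ≥ Y_i + 1, λ)`,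
`(B_{i+1} ≤ C_i⁰ + (n+4), ¬x_i)`, `(B_{i+1} ≤ C_i¹ + (n+4), x_i)`. -/
def gadget (n : ℕ) (i : Fin n) : Set (PhiCon n) :=
  {(.B i.castSucc, .D i, 1, pairLabel (.c0 i) true (.c1 i) true),
   (.D i, .A i.castSucc, -((n : ℝ) + 2), pairLabel (.c0 i) false (.c1 i) false),
   (.X i, .A i.castSucc, -((n : ℝ) + 2), emptyLabel _),
   (.Y i, .X i, -1, emptyLabel _),
   (.A i.succ, .Y i, -1, emptyLabel _),
   (.C0 i, .B i.succ, (n : ℝ) + 4, singleLabel (.x i) false),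
   (.C1 i, .B i.succ, (n : ℝ) + 4, singleLabel (.x i) true)}

/-- The constraints of `Γ_Φ`: `(B₁ - A₁ ≤ 0, λ)`, the gadget constraints, and the
clause constraints `(B_{n+1} - A_{n+1} ≥ n+1, ℓ_j)` for `j = 1, …, m`. -/
def PhiC (n m : ℕ) (cl : Fin m → QClause n) : Set (PhiCon n) :=
  insert (.A 0, .B 0, (0 : ℝ), emptyLabel _)
    ((⋃ i : Fin n, gadget n i) ∪
     (⋃ j : Fin m,
       {(.B (Fin.last n), .A (Fin.last n), -((n : ℝ) + 1), clauseLabel (cl j))}))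

/-- The CSTN `Γ_Φ` associated to the Q3SAT formula
`Φ = ∃x₁∀y₁ ⋯ ∃xₙ∀yₙ ⋀_{j=1}^m (l_{j,1} ∨ l_{j,2} ∨ l_{j,3})`. -/
def GammaPhi (n m : ℕ) (cl : Fin m → QClause n) : CSTN (PhiTask n) (PhiVar n) where
  C := PhiC n m cl
  Cfin := by
    apply Set.Finite.insert
    apply Set.Finite.union
    · exact Set.finite_iUnion fun i =>
        (((((((Set.finite_singleton _).insert _).insert _).insert _).insert
          _).insert _).insert _)
    · exact Set.finite_iUnion fun j => Set.finite_singleton _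
  L := fun _ => emptyLabel _
  OT := Set.range (phiObs n)
  obs := phiObs n
  obs_mem := fun p => ⟨p, rfl⟩
  obs_inj := by
    intro p q hpq
    cases p <;> cases q <;> simp_all [phiObs]
  obs_surj := fun _ hX => hX
  wd1 := by
    intro c _ s _
    constructor <;> · intro p b hb; simp [emptyLabel] at hb

/-! ### Indistinguishable scenarios -/

namespace CSTN

variable {T P : Type} {Γ : CSTN T P}

theorem hist_eq (hT : ∀ s X, X ∈ Γ.Tasks s) {σ : (P → Bool) → T → ℝ} {s s' : P → Bool} {t τ : ℝ}
    (hτ : τ ≤ t) (hdiff : ∀ p, s p ≠ s' p → t ≤ σ s (Γ.obs p))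
    (hobs : ∀ p, σ s (Γ.obs p) < τ ∨ σ s' (Γ.obs p) < τ → σ s (Γ.obs p) = σ s' (Γ.obs p)) :
    Γ.Hist σ τ s = Γ.Hist σ τ s' := by
  funext p
  simp only [Hist, hT, true_and]
  by_cases h : σ s (Γ.obs p) < τ ∨ σ s' (Γ.obs p) < τ
  · have he := hobs p h
    have hlt : σ s (Γ.obs p) < τ := by rcases h with h | h <;> linarith
    have hv : s p = s' p := by
      by_contra hne
      linarith [hdiff p hne]
    rw [← he, if_pos hlt, if_pos hlt, hv]
  · push Not at h
    rw [if_neg h.1.not_gt, if_neg h.2.not_gt]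

/-- If every variable on which `s` and `s'` differ is observed at time `t` or later in `s`, then
a dynamic strategy cannot distinguish `s` from `s'` up to and including time `t`. -/
theorem Dynamic.agree [Finite P] (hT : ∀ s X, X ∈ Γ.Tasks s) {σ : (P → Bool) → T → ℝ}
    (hdyn : Γ.Dynamic σ) {s s' : P → Bool} {t : ℝ}
    (hdiff : ∀ p, s p ≠ s' p → t ≤ σ s (Γ.obs p)) {X : T} (hX : σ s X ≤ t ∨ σ s' X ≤ t) :
    σ s' X = σ s X := by
  have key : ∀ Z : T, min (σ s Z) (σ s' Z) ≤ t →
      (∀ p, min (σ s (Γ.obs p)) (σ s' (Γ.obs p)) < min (σ s Z) (σ s' Z) →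
        σ s (Γ.obs p) = σ s' (Γ.obs p)) → σ s Z = σ s' Z := by
    intro Z hZ hp
    have hh := hist_eq hT hZ hdiff fun p h => hp p (min_lt_iff.2 h)
    rcases min_choice (σ s Z) (σ s' Z) with h | h <;> rw [h] at hh
    · exact (hdyn s s' Z (hT s Z) hh).2.symm
    · exact (hdyn s' s Z (hT s' Z) hh.symm).2
  -- Among the observation tasks on which the schedules disagree, consider an earliest one.
  have hobs : ∀ p, min (σ s (Γ.obs p)) (σ s' (Γ.obs p)) ≤ t →
      σ s (Γ.obs p) = σ s' (Γ.obs p) := by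
    by_contra! hne
    obtain ⟨p, ⟨hp, hpne⟩, hmin⟩ := Set.exists_min_image
      {p | min (σ s (Γ.obs p)) (σ s' (Γ.obs p)) ≤ t ∧ σ s (Γ.obs p) ≠ σ s' (Γ.obs p)}
      (fun p => min (σ s (Γ.obs p)) (σ s' (Γ.obs p))) (Set.toFinite _) hne
    refine hpne (key _ hp fun q hq => ?_)
    by_contra hqne
    exact (hmin q ⟨hq.le.trans hp, hqne⟩).not_gt hq
  have hX' := min_le_iff.2 hX
  exact (key X hX' fun p hp => hobs p (hp.le.trans hX')).symm

end CSTN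

/-! ### Constraints of one gadget -/

instance (n : ℕ) : Finite (PhiVar n) :=
  Finite.of_surjective (α := (Fin n ⊕ Fin n) ⊕ (Fin n ⊕ Fin n))
    (Sum.elim (Sum.elim .x .y) (Sum.elim .c0 .c1)) (by
      rintro (i | i | i | i)
      exacts [⟨.inl (.inl i), rfl⟩, ⟨.inl (.inr i), rfl⟩, ⟨.inr (.inl i), rfl⟩,
        ⟨.inr (.inr i), rfl⟩])

theorem sats_emptyLabel {P : Type} (s : P → Bool) : sats s (emptyLabel P) := by
  intro p b h
  simp [emptyLabel] at h

theorem sats_singleLabel {n : ℕ} {s : PhiVar n → Bool} {p : PhiVar n} {b : Bool} (h : s p = b) :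
    sats s (singleLabel p b) := by
  intro q c hq
  simp only [singleLabel] at hq
  split_ifs at hq with h1
  simp_all

theorem sats_pairLabel {n : ℕ} {s : PhiVar n → Bool} {p q : PhiVar n} {b c : Bool}
    (hp : s p = b) (hq : s q = c) : sats s (pairLabel p b q c) := by
  intro r d hr
  simp only [pairLabel] at hr
  split_ifs at hr with h1 h2 <;> simp_all

section Gadget

variable {n m : ℕ} {cl : Fin m → QClause n} {σ : (PhiVar n → Bool) → PhiTask n → ℝ}

theorem mem_tasks (s : PhiVar n → Bool) (X : PhiTask n) : X ∈ (GammaPhi n m cl).Tasks s :=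
  sats_emptyLabel s

theorem gadget_le (hv : (GammaPhi n m cl).Viable σ) (s : PhiVar n → Bool) (i : Fin n)
    {U V : PhiTask n} {δ : ℝ} {ℓ : CLabel (PhiVar n)} (hc : (U, V, δ, ℓ) ∈ gadget n i)
    (hs : sats s ℓ) : σ s V - σ s U ≤ δ :=
  hv s (U, V, δ, ℓ) (Or.inr (Or.inl (Set.mem_iUnion.2 ⟨i, hc⟩))) hs

theorem X_ge (hv : (GammaPhi n m cl).Viable σ) (s : PhiVar n → Bool) (i : Fin n) :
    σ s (.A i.castSucc) + (n + 2) ≤ σ s (.X i) := by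
  have := gadget_le hv s i (U := .X i) (V := .A i.castSucc) (by simp [gadget]; rfl)
    (sats_emptyLabel s)
  linarith

theorem Y_ge (hv : (GammaPhi n m cl).Viable σ) (s : PhiVar n → Bool) (i : Fin n) :
    σ s (.X i) + 1 ≤ σ s (.Y i) := by
  have := gadget_le hv s i (U := .Y i) (V := .X i) (by simp [gadget]; rfl) (sats_emptyLabel s)
  linarith

theorem A_succ_ge (hv : (GammaPhi n m cl).Viable σ) (s : PhiVar n → Bool) (i : Fin n) :
    σ s (.Y i) + 1 ≤ σ s (.A i.succ) := by
  have := gadget_le hv s i (U := .A i.succ) (V := .Y i) (by simp [gadget]; rfl)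
    (sats_emptyLabel s)
  linarith

theorem D_le (hv : (GammaPhi n m cl).Viable σ) {s : PhiVar n → Bool} {i : Fin n}
    (h0 : s (.c0 i) = true) (h1 : s (.c1 i) = true) :
    σ s (.D i) ≤ σ s (.B i.castSucc) + 1 := by
  have := gadget_le hv s i (U := .B i.castSucc) (V := .D i) (by simp [gadget]; rfl)
    (sats_pairLabel h0 h1)
  linarith

theorem D_ge (hv : (GammaPhi n m cl).Viable σ) {s : PhiVar n → Bool} {i : Fin n}
    (h0 : s (.c0 i) = false) (h1 : s (.c1 i) = false) :
    σ s (.A i.castSucc) + (n + 2) ≤ σ s (.D i) := by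
  have := gadget_le hv s i (U := .D i) (V := .A i.castSucc) (by simp [gadget]; rfl)
    (sats_pairLabel h0 h1)
  linarith

/-- The task `C_i⁰` or `C_i¹`, selected by a Boolean. -/
def taskC (i : Fin n) (b : Bool) : PhiTask n := if b then .C1 i else .C0 i

theorem B_succ_le (hv : (GammaPhi n m cl).Viable σ) {s : PhiVar n → Bool} {i : Fin n} {b : Bool}
    (h : s (.x i) = b) : σ s (.B i.succ) ≤ σ s (taskC i b) + (n + 4) := by
  cases b
  · have := gadget_le hv s i (U := .C0 i) (V := .B i.succ) (by simp [gadget]; rfl)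
      (sats_singleLabel h)
    simp only [taskC]
    norm_num
    linarith
  · have := gadget_le hv s i (U := .C1 i) (V := .B i.succ) (by simp [gadget]; rfl)
      (sats_singleLabel h)
    simp only [taskC]
    norm_num
    linarith

/-! ### What observations can influence in one gadget -/

/-- Resetting `p` does not affect the tasks executed up to the observation of `p`. -/
theorem update_agree (hdyn : (GammaPhi n m cl).Dynamic σ) (s : PhiVar n → Bool) (p : PhiVar n)
    (b : Bool) {Z : PhiTask n} (hZ : σ s Z ≤ σ s (phiObs n p)) :
    σ (Function.update s p b) Z = σ s Z := by
  refine hdyn.agree mem_tasks (t := σ s (phiObs n p)) (fun q hq => ?_) (Or.inl hZ)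
  by_cases h : q = p
  · subst h
    exact le_rfl
  · exact absurd (Function.update_of_ne h b s).symm hq

/-- The task `D_i` forces one of `c_i⁰`, `c_i¹` to be observed early. -/
theorem C_early (hv : (GammaPhi n m cl).Viable σ) (hdyn : (GammaPhi n m cl).Dynamic σ)
    {s : PhiVar n → Bool} {i : Fin n}
    (hB : σ s (.B i.castSucc) - σ s (.A i.castSucc) ≤ i.val) :
    ∃ b, σ s (taskC i b) ≤ σ s (.A i.castSucc) + i.val + 1 := by
  by_contra! h
  have h0 : σ s (.A i.castSucc) + i.val + 1 < σ s (.C0 i) := h false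
  have h1 : σ s (.A i.castSucc) + i.val + 1 < σ s (.C1 i) := h true
  have hin : (i.val : ℝ) + 1 ≤ n := by exact_mod_cast i.isLt
  have hi0 : (0 : ℝ) ≤ i.val := Nat.cast_nonneg _
  -- `r b` is `s` with both `c_i⁰` and `c_i¹` set to `b`.
  let r : Bool → PhiVar n → Bool := fun b =>
    Function.update (Function.update s (.c0 i) b) (.c1 i) b
  have hr : ∀ b (Z : PhiTask n), σ s Z ≤ σ s (.A i.castSucc) + i.val + 1 ∨
      σ (r b) Z ≤ σ s (.A i.castSucc) + i.val + 1 → σ (r b) Z = σ s Z := by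
    intro b Z hZ
    refine hdyn.agree mem_tasks (fun q hq => ?_) hZ
    by_cases e1 : q = .c1 i
    · subst e1
      exact h1.le
    by_cases e0 : q = .c0 i
    · subst e0
      exact h0.le
    · simp [r, e0, e1] at hq
  have hr0 : ∀ b, r b (.c0 i) = b := fun b => by simp [r]
  have hr1 : ∀ b, r b (.c1 i) = b := fun b => by simp [r]
  have hD1 := D_le hv (hr0 true) (hr1 true)
  have hD0 := D_ge hv (hr0 false) (hr1 false)
  rw [hr true (.B i.castSucc) (Or.inl (by linarith))] at hD1
  rw [hr false (.A i.castSucc) (Or.inl (by linarith))] at hD0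
  have hD := hr true (.D i) (Or.inr (by linarith))
  rw [hr false (.D i) (Or.inl (by linarith))] at hD0
  linarith

end Gadget

/-! ### Induction over the gadgets -/

/-- The inductive construction in **Lemma 7**: given any `f : {0,1}* → {0,1}` and
any viable and dynamic `σ` for `Γ_Φ`, for every `I ∈ {0, 1, …, n}` there is a
scenario `s_I` with (a) `[σ(s_I)]_{B_{I+1}} - [σ(s_I)]_{A_{I+1}} ≤ I`
(in 0-based indices, `B_{I+1}` is `B ⟨I⟩`), and
(b) `s_I(y_i) = f(s_I(x_1), …, s_I(x_i))` for every `i = 1, …, I`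
(0-based: every `i : Fin n` with `i.val < I`). -/
theorem gammaPhi_nature_followup (n m : ℕ) (hn : 1 ≤ n) (hm : 1 ≤ m)
    (cl : Fin m → QClause n) (hgood : ∀ j, GoodClause (cl j))
    (f : List Bool → Bool)
    (σ : (PhiVar n → Bool) → PhiTask n → ℝ)
    (hviable : (GammaPhi n m cl).Viable σ) (hdyn : (GammaPhi n m cl).Dynamic σ) :
    ∀ I : ℕ, ∀ hI : I ≤ n, ∃ s : PhiVar n → Bool,
      σ s (.B ⟨I, Nat.lt_succ_of_le hI⟩) - σ s (.A ⟨I, Nat.lt_succ_of_le hI⟩) ≤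
        (I : ℝ) ∧
      ∀ i : Fin n, i.val < I →
        s (.y i) =
          f (List.ofFn fun k : Fin (i.val + 1) =>
              s (.x ⟨k.val, by have hk := k.isLt; have hi := i.isLt; omega⟩)) := by
  intro I
  induction I with
  | zero =>
    intro hI
    refine ⟨fun _ => false, ?_, fun i hi => absurd hi (Nat.not_lt_zero _)⟩
    have := hviable (fun _ => false) (.A 0, .B 0, (0 : ℝ), emptyLabel _) (Or.inl rfl)
      (sats_emptyLabel _)
    simpa using this
  | succ I ih =>
    intro hI
    obtain ⟨s, hB, hf⟩ := ih (Nat.le_of_succ_le hI)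
    let i : Fin n := ⟨I, hI⟩
    have hB' : σ s (.B i.castSucc) - σ s (.A i.castSucc) ≤ i.val := hB
    obtain ⟨b, hC⟩ := C_early hviable hdyn hB'
    have hin : (i.val : ℝ) + 1 ≤ n := by exact_mod_cast i.isLt
    let s₁ := Function.update s (.x i) b
    -- The value of `f` is read off `s₁`, since it depends on the new value of `x_I`.
    let s₂ := Function.update s₁ (.y i)
      (f (List.ofFn fun k : Fin (i.val + 1) =>
        s₁ (.x ⟨k.val, by have hk := k.isLt; have hi := i.isLt; omega⟩)))
    have hX := X_ge hviable s i
    have hA₁ : σ s₁ (.A i.castSucc) = σ s (.A i.castSucc) :=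
      update_agree hdyn s (.x i) b (by change _ ≤ σ s (.X i); linarith)
    have hC₁ : σ s₁ (taskC i b) = σ s (taskC i b) :=
      update_agree hdyn s (.x i) b (by change _ ≤ σ s (.X i); linarith)
    have hX₁ := X_ge hviable s₁ i
    have hY₁ := Y_ge hviable s₁ i
    have hA₂ : σ s₂ (.A i.castSucc) = σ s₁ (.A i.castSucc) :=
      update_agree hdyn s₁ (.y i) _ (by change _ ≤ σ s₁ (.Y i); linarith)
    have hC₂ : σ s₂ (taskC i b) = σ s₁ (taskC i b) :=
      update_agree hdyn s₁ (.y i) _ (by change _ ≤ σ s₁ (.Y i); linarith)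
    have hxx : ∀ k, s₂ (.x k) = s₁ (.x k) := fun k => by simp [s₂]
    have hB₂ := B_succ_le hviable (s := s₂) (i := i) (b := b) (by simp [s₂, s₁])
    have hX₂ := X_ge hviable s₂ i
    have hY₂ := Y_ge hviable s₂ i
    have hA₂' := A_succ_ge hviable s₂ i
    refine ⟨s₂, ?_, fun j hj => ?_⟩
    · have : σ s₂ (.B i.succ) - σ s₂ (.A i.succ) ≤ (i.val : ℝ) + 1 := by linarith
      push_cast
      exact this
    · simp only [hxx]
      by_cases hji : j = i
      · subst hji
        simp [s₂]
      · have hlt : j.val < I := by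
          have : j.val ≠ I := fun h => hji (Fin.ext h)
          omega
        have hy : s₂ (.y j) = s (.y j) := by simp [s₂, s₁, hji]
        rw [hy, hf j hlt]
        congr 2
        funext k
        have hne : (⟨k.val, by have hk := k.isLt; have hi := j.isLt; omega⟩ : Fin n) ≠ i := by
          intro h
          have := congrArg Fin.val h
          have hk := k.isLt
          simp only [i] at this
          omega
        simp [s₁, hne]
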